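/- arXiv:2310.08218 — 3 statements merged into one kernel-verified Lean document; each statement's English description precedes it below -/
import Mathlib

section
/- Let d ≥ 1. Let w : ℝ^d × ℝ → ℝ^d and f : ℝ^d × ℝ → ℝ be continuously differentiable, and let Φ : ℝ^d × ℝ → ℝ^d be continuously differentiable with Φ(ξ,0) = ξ for all ξ, ∂_t Φ(ξ,t) = w(Φ(ξ,t),t) for all (ξ,t), and Φ(·,t) injective for each t. Let Ω⁰ ⊆ ℝ^d be a compact measurable set and set Ω(t) := Φ(·,t)(Ω⁰). Then for every t₀ ∈ ℝ the function t ↦ ∫_{Ω(t)} f(x,t) dx is differentiable at t₀ with derivative ∫_{Ω(t₀)} ( D_t f(x,t₀) + f(x,t₀) · div_x w(x,t₀) ) dx, where div_x w = Σ_{i=1}^d ∂_{x_i} w_i. -/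
/-!
Pulling the integral back to the reference configuration turns the moving domain into a fixed one:
since `Φ(·,t)` is injective,
`∫_{Ω(t)} f(x,t) dx = ∫_{Ω⁰} |J(ξ,t)| f(Φ(ξ,t),t) dξ` with `J = det D_ξ Φ`
(`integral_image_eq_integral_abs_det_fderiv_smul`).

The Jacobian satisfies Liouville's formula `∂_t J = (div w)(Φ,t) J` with `J(ξ,0) = 1`, hence is an
exponential and `|J| = J` (`jacobian_pos`). As `Φ` is only `C¹`, the variational equation
`∂_t (D_ξ Φ) = D_x w(Φ,t) D_ξ Φ` behind it cannot be obtained by exchanging second derivatives;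
instead, the integrated equation `Φ(ξ,t) = ξ + ∫₀ᵗ w(Φ(ξ,s),s) ds` is differentiated in `ξ` under
the integral sign, and the resulting integral equation is then differentiated in `t`
(`hasDerivAt_fderiv_flow`).

Differentiating `J(ξ,t) f(Φ(ξ,t),t)` under the integral over `Ω⁰` gives
`J (D_t f + f div w)(Φ(ξ,t),t)`, and the same change of variables leads back to `Ω(t₀)`.
-/

open MeasureTheory

/-- Differentiation under the integral over a relatively compact set, when the integrand and its
derivative in the parameter are jointly continuous. -/
theorem hasDerivAt_setIntegral_of_continuous
    {α E : Type*} [TopologicalSpace α] [MeasurableSpace α] [OpensMeasurableSpace α]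
    [NormedAddCommGroup E] [NormedSpace ℝ E] [SecondCountableTopologyEither α E]
    (μ : Measure α) [IsFiniteMeasureOnCompacts μ]
    {S K : Set α} (hK : IsCompact K) (hS : MeasurableSet S) (hSK : S ⊆ K)
    (F F' : ℝ → α → E)
    (hF : Continuous fun p : ℝ × α => F p.1 p.2)
    (hF' : Continuous fun p : ℝ × α => F' p.1 p.2)
    (hd : ∀ x a, HasDerivAt (fun y => F y a) (F' x a) x) (x₀ : ℝ) :
    HasDerivAt (fun x => ∫ a in S, F x a ∂μ) (∫ a in S, F' x₀ a ∂μ) x₀ := by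
  have hSfin : μ S < ⊤ := (measure_mono hSK).trans_lt hK.measure_lt_top
  have hFc : ∀ x, Continuous (F x) := fun x => hF.comp (by fun_prop : Continuous fun a => (x, a))
  have hFc' : ∀ x, Continuous (F' x) :=
    fun x => hF'.comp (by fun_prop : Continuous fun a => (x, a))
  have hmeas : ∀ G : α → E, Continuous G → AEStronglyMeasurable G (μ.restrict S) :=
    fun G hG => hG.aestronglyMeasurable
  have hcomp : IsCompact (Set.Icc (x₀ - 1) (x₀ + 1) ×ˢ K) := isCompact_Icc.prod hK
  obtain ⟨C, hC⟩ := hcomp.exists_bound_of_continuousOn hF'.continuousOn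
  have hint : Integrable (F x₀) (μ.restrict S) := by
    obtain ⟨D, hD⟩ := hK.exists_bound_of_continuousOn (hFc x₀).continuousOn
    exact IntegrableOn.of_bound hSfin (hmeas _ (hFc x₀)) D
      (ae_restrict_of_forall_mem hS fun a ha => hD a (hSK ha))
  refine (hasDerivAt_integral_of_dominated_loc_of_deriv_le (bound := fun _ => C)
    (Icc_mem_nhds (by linarith : x₀ - 1 < x₀) (by linarith : x₀ < x₀ + 1))
    (Filter.Eventually.of_forall fun x => hmeas _ (hFc x)) hint (hmeas _ (hFc' x₀)) ?_ ?_ ?_).2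
  · exact ae_restrict_of_forall_mem hS fun a ha x hx => hC (x, a) ⟨hx, hSK ha⟩
  · exact integrableOn_const hSfin.ne
  · exact Filter.Eventually.of_forall fun a x _ => hd x a

/-- Jacobi's formula for a matrix solution of the linear equation `A' = B A`. -/
theorem hasDerivAt_det_of_linear_ode {n : Type*} [Fintype n] [DecidableEq n]
    (A : ℝ → Matrix n n ℝ) (B : Matrix n n ℝ) (t : ℝ)
    (hA : ∀ i j, HasDerivAt (fun s => A s i j) ((B * A t) i j) t) :
    HasDerivAt (fun s => (A s).det) (B.trace * (A t).det) t := by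
  -- the determinant as a continuous multilinear function of the rows
  let D : ContinuousMultilinearMap ℝ (fun _ : n => n → ℝ) ℝ :=
    ⟨(Matrix.detRowAlternating (n := n) (R := ℝ)).toMultilinearMap,
      (continuous_id.matrix_det : Continuous fun M : Matrix n n ℝ => M.det)⟩
  have hA' : HasDerivAt (fun s i => A s i) (fun i => (B * A t) i) t :=
    hasDerivAt_pi.2 fun i => hasDerivAt_pi.2 fun j => hA i j
  have h := (D.hasFDerivAt (fun i => A t i)).comp_hasDerivAt t hA'
  have hval : D.linearDeriv (fun i => A t i) (fun i => (B * A t) i) = B.trace * (A t).det := by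
    rw [ContinuousMultilinearMap.linearDeriv_apply, Matrix.trace, Finset.sum_mul]
    refine Finset.sum_congr rfl fun i _ => ?_
    have hrow : (B * A t) i = ∑ k, B i k • A t k := by
      ext j
      simp [Matrix.mul_apply, Finset.sum_apply]
    rw [hrow]
    exact Matrix.det_updateRow_sum (A t) i (B i)
  rw [hval] at h
  exact h

/-- A scalar solution of `J' = T J` with `J 0 = 1` is positive, being the exponential of a primitive
of `T`. -/
theorem pos_of_linear_ode (J T : ℝ → ℝ) (hT : Continuous T)
    (hJ : ∀ t, HasDerivAt J (T t * J t) t) (h0 : J 0 = 1) (t : ℝ) : 0 < J t := by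
  have hP : ∀ t, HasDerivAt (fun t => ∫ s in (0 : ℝ)..t, T s) (T t) t := fun t =>
    (hT.integral_hasStrictDerivAt 0 t).hasDerivAt
  have hd : ∀ t, HasDerivAt (fun t => J t * Real.exp (-∫ s in (0 : ℝ)..t, T s)) 0 t := fun t => by
    convert! (hJ t).mul (hP t).neg.exp using 1
    ring
  have hc := is_const_of_deriv_eq_zero (fun t => (hd t).differentiableAt) (fun t => (hd t).deriv) t 0
  simp only [h0, intervalIntegral.integral_same, neg_zero, Real.exp_zero, mul_one] at hc
  exact pos_of_mul_pos_left (hc ▸ one_pos) (Real.exp_pos _).le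

section Flow

variable {d : ℕ} {w Φ : EuclideanSpace ℝ (Fin d) × ℝ → EuclideanSpace ℝ (Fin d)}

/-- The variational equation: `∂_t (D_ξ Φ v) = D_x w(Φ,t) (D_ξ Φ v)`. -/
theorem hasDerivAt_fderiv_flow (hw : ContDiff ℝ 1 w) (hΦ : ContDiff ℝ 1 Φ)
    (hΦ0 : ∀ ξ, Φ (ξ, 0) = ξ)
    (hΦt : ∀ ξ t, HasDerivAt (fun s => Φ (ξ, s)) (w (Φ (ξ, t), t)) t)
    (ξ v : EuclideanSpace ℝ (Fin d)) (t : ℝ) :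
    HasDerivAt (fun s => fderiv ℝ Φ (ξ, s) (v, 0))
      (fderiv ℝ w (Φ (ξ, t), t) (fderiv ℝ Φ (ξ, t) (v, 0), 0)) t := by
  have hwc := hw.continuous
  have hΦc := hΦ.continuous
  have hw' : Continuous (fderiv ℝ w) := hw.continuous_fderiv (by norm_num)
  have hΦ' : Continuous (fderiv ℝ Φ) := hΦ.continuous_fderiv (by norm_num)
  -- derivative of `Φ` along the line through `ξ` in direction `v`
  have hline : ∀ r s : ℝ, HasDerivAt (fun r => Φ (ξ + r • v, s))
      (fderiv ℝ Φ (ξ + r • v, s) (v, 0)) r := fun r s => by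
    have h1 : HasDerivAt (fun r : ℝ => (ξ + r • v, s)) (v, 0) r := by
      refine HasDerivAt.prodMk ?_ (hasDerivAt_const _ _)
      simpa using ((hasDerivAt_id r).smul_const v).const_add ξ
    exact ((hΦ.differentiable (by norm_num)) _).hasFDerivAt.comp_hasDerivAt r h1
  let G : ℝ → ℝ → EuclideanSpace ℝ (Fin d) := fun r s => w (Φ (ξ + r • v, s), s)
  let G' : ℝ → ℝ → EuclideanSpace ℝ (Fin d) := fun r s =>
    fderiv ℝ w (Φ (ξ + r • v, s), s) (fderiv ℝ Φ (ξ + r • v, s) (v, 0), 0)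
  have hGc : Continuous fun p : ℝ × ℝ => G p.1 p.2 := by fun_prop
  have hGc' : Continuous fun p : ℝ × ℝ => G' p.1 p.2 := by fun_prop
  have hGd : ∀ r s, HasDerivAt (fun r => G r s) (G' r s) r := fun r s =>
    ((hw.differentiable (by norm_num)) _).hasFDerivAt.comp_hasDerivAt r
      ((hline r s).prodMk (hasDerivAt_const r s))
  have hG0 : Continuous (G' 0) := hGc'.comp (by fun_prop : Continuous fun s : ℝ => ((0 : ℝ), s))
  have hIntEq : ∀ r t : ℝ, Φ (ξ + r • v, t) = ξ + r • v + ∫ s in (0 : ℝ)..t, G r s := fun r t => by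
    have hc : Continuous (G r) := hGc.comp (by fun_prop : Continuous fun s : ℝ => (r, s))
    have := intervalIntegral.integral_eq_sub_of_hasDerivAt (a := 0) (b := t)
      (fun s _ => hΦt (ξ + r • v) s) (hc.intervalIntegrable 0 t)
    simp only [G]
    rw [this, hΦ0]
    abel
  have hAeq : ∀ t : ℝ, fderiv ℝ Φ (ξ, t) (v, 0) = v + ∫ s in (0 : ℝ)..t, G' 0 s := fun t => by
    have h1 := hline 0 t
    have h2 : HasDerivAt (fun r => ∫ s in (0 : ℝ)..t, G r s) (∫ s in (0 : ℝ)..t, G' 0 s) 0 := by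
      simp only [intervalIntegral.intervalIntegral_eq_integral_uIoc]
      exact (hasDerivAt_setIntegral_of_continuous volume isCompact_uIcc measurableSet_uIoc
        Set.uIoc_subset_uIcc G G' hGc hGc' hGd 0).const_smul
          (if (0 : ℝ) ≤ t then (1 : ℝ) else -1)
    have h3 : HasDerivAt (fun r : ℝ => ξ + r • v) v 0 := by
      simpa using ((hasDerivAt_id (0 : ℝ)).smul_const v).const_add ξ
    have h4 := h3.add h2
    have h5 : (fun r => Φ (ξ + r • v, t))
        = (fun r : ℝ => ξ + r • v) + fun r => ∫ s in (0 : ℝ)..t, G r s :=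
      funext fun r => hIntEq r t
    rw [h5] at h1
    simpa using h1.unique h4
  have h := ((hG0.integral_hasStrictDerivAt 0 t).hasDerivAt).const_add v
  simp only [← hAeq] at h
  simpa [G'] using h

/-- The spatial divergence `div_x w` at a space-time point. -/
noncomputable def spaceDiv (w : EuclideanSpace ℝ (Fin d) × ℝ → EuclideanSpace ℝ (Fin d))
    (p : EuclideanSpace ℝ (Fin d) × ℝ) : ℝ :=
  ∑ i, fderiv ℝ w p (EuclideanSpace.single i 1, 0) i

/-- The matrix of the spatial derivative `D_x u` at a space-time point, in the standard basis. -/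
noncomputable def spaceJac (u : EuclideanSpace ℝ (Fin d) × ℝ → EuclideanSpace ℝ (Fin d))
    (p : EuclideanSpace ℝ (Fin d) × ℝ) : Matrix (Fin d) (Fin d) ℝ :=
  Matrix.of fun i j => fderiv ℝ u p (EuclideanSpace.single j 1, 0) i

theorem continuous_spaceJac {u : EuclideanSpace ℝ (Fin d) × ℝ → EuclideanSpace ℝ (Fin d)}
    (hu : ContDiff ℝ 1 u) : Continuous (spaceJac u) := by
  have hu' : Continuous (fderiv ℝ u) := hu.continuous_fderiv (by norm_num)
  refine continuous_matrix fun i j => ?_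
  simp only [spaceJac, Matrix.of_apply]
  fun_prop

theorem continuous_spaceDiv (hw : ContDiff ℝ 1 w) : Continuous (spaceDiv w) :=
  (continuous_spaceJac hw).matrix_trace

/-- Liouville's formula `∂_t J = (div w) J` for the Jacobian determinant of the flow. -/
theorem hasDerivAt_jacobian (hw : ContDiff ℝ 1 w) (hΦ : ContDiff ℝ 1 Φ)
    (hΦ0 : ∀ ξ, Φ (ξ, 0) = ξ)
    (hΦt : ∀ ξ t, HasDerivAt (fun s => Φ (ξ, s)) (w (Φ (ξ, t), t)) t)
    (ξ : EuclideanSpace ℝ (Fin d)) (t : ℝ) :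
    HasDerivAt (fun s => (spaceJac Φ (ξ, s)).det)
      (spaceDiv w (Φ (ξ, t), t) * (spaceJac Φ (ξ, t)).det) t := by
  refine hasDerivAt_det_of_linear_ode (fun s => spaceJac Φ (ξ, s)) (spaceJac w (Φ (ξ, t), t)) t
    fun i j => ?_
  have h := hasDerivAt_fderiv_flow hw hΦ hΦ0 hΦt ξ (EuclideanSpace.single j 1) t
  have hi := (EuclideanSpace.proj (𝕜 := ℝ) i).hasFDerivAt.comp_hasDerivAt t h
  convert! hi using 1
  set u : EuclideanSpace ℝ (Fin d) := fderiv ℝ Φ (ξ, t) (EuclideanSpace.single j 1, 0) with hu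
  let L : EuclideanSpace ℝ (Fin d) →L[ℝ] EuclideanSpace ℝ (Fin d) :=
    (fderiv ℝ w (Φ (ξ, t), t)).comp (ContinuousLinearMap.inl ℝ _ ℝ)
  have hL : ∀ x, fderiv ℝ w (Φ (ξ, t), t) (x, 0) = L x := fun x => by simp [L]
  have hsum : u = ∑ k, u k • EuclideanSpace.single k (1 : ℝ) := by
    simpa using ((EuclideanSpace.basisFun (Fin d) ℝ).sum_repr u).symm
  have hLu : L u = ∑ k, u k • L (EuclideanSpace.single k 1) := by
    conv_lhs => rw [hsum]
    simp only [map_sum, map_smul]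
  simp only [Matrix.mul_apply, spaceJac, Matrix.of_apply, ← hu, hL, hLu]
  simp [mul_comm]

theorem jacobian_pos (hw : ContDiff ℝ 1 w) (hΦ : ContDiff ℝ 1 Φ)
    (hΦ0 : ∀ ξ, Φ (ξ, 0) = ξ)
    (hΦt : ∀ ξ t, HasDerivAt (fun s => Φ (ξ, s)) (w (Φ (ξ, t), t)) t)
    (ξ : EuclideanSpace ℝ (Fin d)) (t : ℝ) : 0 < (spaceJac Φ (ξ, t)).det := by
  have hΦc := hΦ.continuous
  refine pos_of_linear_ode (fun s => (spaceJac Φ (ξ, s)).det)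
    (fun s => spaceDiv w (Φ (ξ, s), s)) ((continuous_spaceDiv hw).comp (by fun_prop))
    (hasDerivAt_jacobian hw hΦ hΦ0 hΦt ξ) ?_ t
  have h1 : spaceJac Φ (ξ, 0) = 1 := by
    ext i j
    have hd : HasFDerivAt (fun x => Φ (x, (0 : ℝ)))
        ((fderiv ℝ Φ (ξ, 0)).comp (ContinuousLinearMap.inl ℝ _ ℝ)) ξ :=
      ((hΦ.differentiable (by norm_num)) _).hasFDerivAt.comp ξ (hasFDerivAt_prodMk_left ξ 0)
    simp only [hΦ0] at hd
    have := hd.unique (hasFDerivAt_id ξ)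
    have h2 := congrArg (fun L => L (EuclideanSpace.single j (1 : ℝ)) i) this
    simpa [spaceJac, Matrix.one_apply, Pi.single_apply] using h2
  rw [h1, Matrix.det_one]

/-- Change of variables from `Φ(·,t)(S)` to `S`; the Jacobian needs no absolute value, being
positive. -/
theorem setIntegral_image_flow (hw : ContDiff ℝ 1 w) (hΦ : ContDiff ℝ 1 Φ)
    (hΦ0 : ∀ ξ, Φ (ξ, 0) = ξ)
    (hΦt : ∀ ξ t, HasDerivAt (fun s => Φ (ξ, s)) (w (Φ (ξ, t), t)) t)
    (hΦinj : ∀ t : ℝ, Function.Injective (fun ξ => Φ (ξ, t)))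
    {S : Set (EuclideanSpace ℝ (Fin d))} (hS : MeasurableSet S) (t : ℝ)
    (g : EuclideanSpace ℝ (Fin d) → ℝ) :
    ∫ x in (fun ξ => Φ (ξ, t)) '' S, g x
      = ∫ ξ in S, (spaceJac Φ (ξ, t)).det * g (Φ (ξ, t)) := by
  have hd : ∀ ξ, HasFDerivAt (fun x => Φ (x, t))
      ((fderiv ℝ Φ (ξ, t)).comp (ContinuousLinearMap.inl ℝ _ ℝ)) ξ := fun ξ =>
    ((hΦ.differentiable (by norm_num)) _).hasFDerivAt.comp ξ (hasFDerivAt_prodMk_left ξ t)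
  rw [integral_image_eq_integral_abs_det_fderiv_smul volume hS
    (fun ξ _ => (hd ξ).hasFDerivWithinAt) (hΦinj t).injOn]
  congr 1
  ext ξ
  have hdet : ((fderiv ℝ Φ (ξ, t)).comp (ContinuousLinearMap.inl ℝ _ ℝ)).det
      = (spaceJac Φ (ξ, t)).det := by
    rw [ContinuousLinearMap.det,
      ← LinearMap.det_toMatrix (EuclideanSpace.basisFun (Fin d) ℝ).toBasis]
    congr 1
  rw [hdet, abs_of_pos (jacobian_pos hw hΦ hΦ0 hΦt ξ t), smul_eq_mul]

end Flow

/-- **Transport Theorem** (Lemma 2.1): if the domain `Ω(t) = Φ(·,t)(Ω⁰)` moves with the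
velocity field `w` generating the flow map `Φ`, then
`d/dt ∫_{Ω(t)} f dx = ∫_{Ω(t)} (D_t f + f ∇·w) dx`,
where `D_t f (x,t) = ∂_t f + w·∇_x f = fderiv ℝ f (x,t) (w(x,t), 1)`. -/
theorem transport_theorem
    (d : ℕ) (hd : 1 ≤ d)
    (w : EuclideanSpace ℝ (Fin d) × ℝ → EuclideanSpace ℝ (Fin d))
    (f : EuclideanSpace ℝ (Fin d) × ℝ → ℝ)
    (Φ : EuclideanSpace ℝ (Fin d) × ℝ → EuclideanSpace ℝ (Fin d))
    (hw : ContDiff ℝ 1 w) (hf : ContDiff ℝ 1 f) (hΦ : ContDiff ℝ 1 Φ)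
    (hΦ0 : ∀ ξ, Φ (ξ, 0) = ξ)
    (hΦt : ∀ ξ t, HasDerivAt (fun s => Φ (ξ, s)) (w (Φ (ξ, t), t)) t)
    (hΦinj : ∀ t : ℝ, Function.Injective (fun ξ => Φ (ξ, t)))
    (Ω0 : Set (EuclideanSpace ℝ (Fin d)))
    (hΩ0c : IsCompact Ω0) (hΩ0m : MeasurableSet Ω0)
    (t₀ : ℝ) :
    HasDerivAt
      (fun t => ∫ x in (fun ξ => Φ (ξ, t)) '' Ω0, f (x, t))
      (∫ x in (fun ξ => Φ (ξ, t₀)) '' Ω0,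
        (fderiv ℝ f (x, t₀) (w (x, t₀), 1)
          + f (x, t₀) * ∑ i, fderiv ℝ w (x, t₀) (EuclideanSpace.single i 1, 0) i))
      t₀ := by
  have hΦc := hΦ.continuous
  have hwc := hw.continuous
  have hfc := hf.continuous
  have hf' : Continuous (fderiv ℝ f) := hf.continuous_fderiv (by norm_num)
  have hdiv : Continuous fun p : ℝ × EuclideanSpace ℝ (Fin d) =>
      spaceDiv w (Φ (p.2, p.1), p.1) := (continuous_spaceDiv hw).comp (by fun_prop)
  have hJ : Continuous fun p : ℝ × EuclideanSpace ℝ (Fin d) => (spaceJac Φ (p.2, p.1)).det :=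
    (continuous_spaceJac hΦ).matrix_det.comp (by fun_prop)
  have hpull := setIntegral_image_flow hw hΦ hΦ0 hΦt hΦinj hΩ0m
  rw [hpull t₀]
  simp only [hpull]
  refine hasDerivAt_setIntegral_of_continuous volume hΩ0c hΩ0m subset_rfl
    (fun t ξ => (spaceJac Φ (ξ, t)).det * f (Φ (ξ, t), t))
    (fun t ξ => (spaceJac Φ (ξ, t)).det * (fderiv ℝ f (Φ (ξ, t), t) (w (Φ (ξ, t), t), 1)
      + f (Φ (ξ, t), t) * spaceDiv w (Φ (ξ, t), t))) ?_ ?_ ?_ t₀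
  · exact hJ.mul (by fun_prop)
  · refine hJ.mul (Continuous.add ?_ (Continuous.mul ?_ hdiv)) <;> fun_prop
  · intro t ξ
    have h1 := hasDerivAt_jacobian hw hΦ hΦ0 hΦt ξ t
    have h2 : HasDerivAt (fun s => f (Φ (ξ, s), s))
        (fderiv ℝ f (Φ (ξ, t), t) (w (Φ (ξ, t), t), 1)) t :=
      ((hf.differentiable (by norm_num)) _).hasFDerivAt.comp_hasDerivAt t
        ((hΦt ξ t).prodMk (hasDerivAt_id t))
    convert! h1.mul h2 using 1
    ring
end

section
/- For every T ≥ 1 there exists a constant C > 0, depending only on T, such that for all τ ∈ (0,1], all h ∈ (0,1], and every integer M ≥ 1 with M τ ≤ T: Σ_{k=1}^{M} τ · min( 1/(kτ), 1/h² ) ≤ C · min( log(1/τ + 1), log(1/h + 1) ). -/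
/-!
After cancelling `τ`, the summand is `min (1/k) a` with `a = τ / h²`. The harmonic-type bound
`min (1/k) a ≤ 2a / (ak + 1)` smooths the kink of the minimum, and `a / (ak + 1)` is at most the
increment of `log (1 + a x)` over `[k - 1, k]`, so the sum telescopes to at most
`2 log (1 + a M)` (`sum_min_inv_le`).

Taking `a = τ / h²` gives `2 log (1 + T / h²)`, hence the `log (1/h + 1)` bound; taking `a = 1`,
which is allowed because `1/k = min (1/k) 1`, gives `2 log (1 + T / τ)`, hence the
`log (1/τ + 1)` bound. In both cases the dependence on `T` contributes `2 log T`, which is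
absorbed since both logarithms are at least `log 2 > 1/2`.
-/

lemma min_inv_le_log_sub {a : ℝ} (ha : 0 < a) (n : ℕ) :
    min (1 / ((n + 1 : ℕ) : ℝ)) a ≤
      2 * (Real.log (1 + a * ((n + 1 : ℕ) : ℝ)) - Real.log (1 + a * (n : ℝ))) := by
  have hn : (0 : ℝ) ≤ n := n.cast_nonneg
  push_cast
  have h0 : 0 < 1 + a * (n : ℝ) := by positivity
  have h1 : 0 < 1 + a * ((n : ℝ) + 1) := by positivity
  -- `1 - 1/x ≤ log x` at the ratio `x` of consecutive arguments
  have hlog : a / (1 + a * ((n : ℝ) + 1)) ≤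
      Real.log (1 + a * ((n : ℝ) + 1)) - Real.log (1 + a * (n : ℝ)) := by
    rw [← Real.log_div h1.ne' h0.ne']
    refine le_trans (le_of_eq ?_) (Real.one_sub_inv_le_log_of_pos (div_pos h1 h0))
    rw [inv_div]
    field_simp
    ring
  have hmin : min (1 / ((n : ℝ) + 1)) a ≤ 2 * (a / (1 + a * ((n : ℝ) + 1))) := by
    rw [← mul_div_assoc]
    rcases le_total (a * ((n : ℝ) + 1)) 1 with h | h
    · refine (min_le_right _ _).trans ?_
      rw [le_div_iff₀ h1]
      nlinarith
    · refine (min_le_left _ _).trans ?_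
      rw [div_le_div_iff₀ (by positivity) h1]
      linarith
  linarith

lemma sum_min_inv_le {a : ℝ} (ha : 0 < a) (M : ℕ) :
    ∑ k ∈ Finset.Icc 1 M, min (1 / (k : ℝ)) a ≤ 2 * Real.log (1 + a * M) := by
  induction M with
  | zero => simp
  | succ n ih =>
    rw [Finset.sum_Icc_succ_top (by omega)]
    linarith [min_inv_le_log_sub ha n]

/-- Key summation estimate of Appendix B: for every `T ≥ 1` there is `C > 0` (depending only
on `T`) such that for all `τ, h ∈ (0,1]` and `M ≥ 1` with `Mτ ≤ T`,
`∑_{k=1}^M τ min(1/(kτ), 1/h²) ≤ C min(log(1/τ+1), log(1/h+1))`. -/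
theorem smoothing_kernel_sum_bound (T : ℝ) (hT : 1 ≤ T) :
    ∃ C > 0, ∀ τ h : ℝ, τ ∈ Set.Ioc (0 : ℝ) 1 → h ∈ Set.Ioc (0 : ℝ) 1 →
      ∀ M : ℕ, 1 ≤ M → (M : ℝ) * τ ≤ T →
        ∑ k ∈ Finset.Icc 1 M, τ * min (1 / ((k : ℝ) * τ)) (1 / h ^ 2) ≤
          C * min (Real.log (1 / τ + 1)) (Real.log (1 / h + 1)) := by
  have hlT : 0 ≤ Real.log T := Real.log_nonneg hT
  have hT0 : 0 < T := by linarith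
  refine ⟨4 * Real.log T + 4, by positivity, ?_⟩
  rintro τ h ⟨hτ, hτ1⟩ ⟨hh, hh1⟩ M - hMT
  have half_le : ∀ x : ℝ, 0 < x → x ≤ 1 → 1 / 2 ≤ Real.log (1 / x + 1) := fun x hx hx1 => by
    have h2 : (1 : ℝ) ≤ 1 / x := by rwa [le_div_iff₀ hx, one_mul]
    have := Real.log_le_log (by norm_num : (0 : ℝ) < 2) (by linarith : 2 ≤ 1 / x + 1)
    linarith [Real.log_two_gt_d9]
  have hterm : ∀ k ∈ Finset.Icc 1 M, τ * min (1 / ((k : ℝ) * τ)) (1 / h ^ 2) =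
      min (1 / (k : ℝ)) (τ / h ^ 2) := fun k hk => by
    have hk0 : (0 : ℝ) < k := by exact_mod_cast (Finset.mem_Icc.1 hk).1
    rw [mul_min_of_nonneg _ _ hτ.le]
    congr 1 <;> field_simp
  rw [Finset.sum_congr rfl hterm, mul_min_of_nonneg _ _ (by positivity)]
  refine le_min ?_ ?_
  · have hle : ∑ k ∈ Finset.Icc 1 M, min (1 / (k : ℝ)) (τ / h ^ 2) ≤
        ∑ k ∈ Finset.Icc 1 M, min (1 / (k : ℝ)) 1 := by
      refine Finset.sum_le_sum fun k hk => ?_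
      have hk1 : (1 : ℝ) ≤ k := by exact_mod_cast (Finset.mem_Icc.1 hk).1
      exact (min_le_left _ _).trans (le_min le_rfl ((div_le_one (by linarith)).2 hk1))
    have hM : 1 + 1 * (M : ℝ) ≤ T * (1 / τ + 1) := by
      have : (M : ℝ) ≤ T / τ := (le_div_iff₀ hτ).2 hMT
      have e : T * (1 / τ + 1) = T / τ + T := by ring
      linarith
    have hl := Real.log_le_log (by positivity) hM
    rw [Real.log_mul hT0.ne' (by positivity)] at hl
    nlinarith [sum_min_inv_le one_pos M, half_le τ hτ hτ1]
  · have hM : 1 + τ / h ^ 2 * (M : ℝ) ≤ T * (1 / h + 1) ^ 2 := by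
      have h1 : τ / h ^ 2 * (M : ℝ) ≤ T / h ^ 2 := by
        rw [div_mul_eq_mul_div, mul_comm τ]
        gcongr
      have h2 : 0 < T / h := by positivity
      have e : T * (1 / h + 1) ^ 2 = T / h ^ 2 + 2 * (T / h) + T := by
        field_simp
        ring
      linarith
    have hl := Real.log_le_log (by positivity) hM
    rw [Real.log_mul hT0.ne' (by positivity), Real.log_pow] at hl
    push_cast at hl
    nlinarith [sum_min_inv_le (a := τ / h ^ 2) (by positivity) M, half_le h hh hh1]
end

section
/- Let E be a real normed space, T ≥ 1, C₀ ≥ 0, τ ∈ (0,1], h ∈ (0,1], and M an integer with 1 ≤ M and M τ ≤ T. For every pair of integers 0 ≤ m ≤ n ≤ M let S_{m,n} : E → E be a map such that for all u ∈ E: (i) ‖S_{m,n}(u)‖ ≤ C₀ ‖u‖, and (ii) for 0 ≤ m ≤ n < M, ‖S_{m,n+1}(u) − S_{m,n}(u)‖ ≤ C₀ τ · min( 1/((n−m+1)τ), 1/h² ) · ‖u‖. Given g_1, …, g_M ∈ E, define ω_0 := 0 and ω_n := Σ_{m=1}^{n} τ S_{m−1,n}(g_m) for 1 ≤ n ≤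 M. Then there exists a constant C depending only on C₀ and T such that Σ_{n=1}^{M} ‖ω_n − ω_{n−1}‖ ≤ C · min( log(1/τ + 1), log(1/h + 1) ) · Σ_{m=1}^{M} τ ‖g_m‖. -/
/-!
The increment of the Duhamel sums telescopes:
`ω_{k+1} - ω_k = τ S_{k,k+1}(g_{k+1}) + ∑_{m<k} τ (S_{m,k+1} - S_{m,k})(g_{m+1})`.
Stability bounds the first term, smoothing the others, so that `‖ω_{k+1} - ω_k‖` is at most the
discrete convolution of `τ‖g_{m+1}‖` with the kernel `C₀ (δ_{i,0} + min(1/(i+1), τ/h²))`. The `ℓ¹`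
Young inequality (`sum_convolution_le`) then reduces the claim to bounding the `ℓ¹` norm of the
kernel. For every `a > 0` one has `min(1/j, 1/a) ≤ 2/(j+a) ≤ 2 (log(j+a) - log(j-1+a))`, which
telescopes to `2 log(1+M/a)` (`sum_min_le_log`). The choice `a = h²/τ` gives `2 log(1+T/h²)` and
`a = 1` gives `2 log(1+T/τ)`; both are at most `2 log T + 4 L` with `L` the respective logarithm, and
the constants are absorbed using `L ≥ log 2`.
-/

theorem sum_Icc_one_eq_sum_range {A : Type*} [AddCommMonoid A] (f : ℕ → A) (n : ℕ) :
    ∑ m ∈ Finset.Icc 1 n, f m = ∑ m ∈ Finset.range n, f (m + 1) := by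
  induction n with
  | zero => simp
  | succ n ih => rw [Finset.sum_Icc_succ_top (by omega), ih, Finset.sum_range_succ]

/-- Young's inequality `‖w * b‖₁ ≤ ‖w‖₁ ‖b‖₁` for truncated causal convolutions. -/
theorem sum_convolution_le (w b : ℕ → ℝ) (hw : ∀ i, 0 ≤ w i) (hb : ∀ i, 0 ≤ b i) (M : ℕ) :
    ∑ k ∈ Finset.range M, ∑ m ∈ Finset.range (k + 1), w (k - m) * b m ≤
      (∑ i ∈ Finset.range M, w i) * ∑ m ∈ Finset.range M, b m := by
  have hswap : ∑ k ∈ Finset.range M, ∑ m ∈ Finset.range (k + 1), w (k - m) * b m =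
      ∑ m ∈ Finset.range M, ∑ k ∈ Finset.Ico m M, w (k - m) * b m := by
    apply Finset.sum_comm'
    intro x y
    simp only [Finset.mem_range, Finset.mem_Ico]
    omega
  rw [hswap, Finset.mul_sum]
  refine Finset.sum_le_sum fun m _ => ?_
  rw [← Finset.sum_mul, Finset.sum_Ico_eq_sum_range]
  refine mul_le_mul_of_nonneg_right ?_ (hb m)
  simp only [Nat.add_sub_cancel_left]
  exact Finset.sum_le_sum_of_subset_of_nonneg
    (Finset.range_mono (Nat.sub_le M m)) fun i _ _ => hw i

theorem sum_min_le_log (a : ℝ) (ha : 0 < a) (M : ℕ) :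
    ∑ i ∈ Finset.range M, min (1 / ((i : ℝ) + 1)) (1 / a) ≤ 2 * Real.log (1 + M / a) := by
  have hstep : ∀ i : ℕ, min (1 / ((i : ℝ) + 1)) (1 / a) ≤
      2 * Real.log (((i + 1 : ℕ) : ℝ) + a) - 2 * Real.log ((i : ℝ) + a) := by
    intro i
    have hi : (0 : ℝ) ≤ i := Nat.cast_nonneg i
    have h1 : min (1 / ((i : ℝ) + 1)) (1 / a) ≤ 2 / ((i : ℝ) + 1 + a) := by
      rcases le_total a ((i : ℝ) + 1) with h | h
      · refine (min_le_left _ _).trans ?_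
        rw [div_le_div_iff₀ (by positivity) (by positivity)]
        linarith
      · refine (min_le_right _ _).trans ?_
        rw [div_le_div_iff₀ (by positivity) (by positivity)]
        linarith
    -- `1/(x+1) ≤ log(x+1) - log x` is the inequality `1 - 1/t ≤ log t` at `t = (x+1)/x`.
    have h2 := Real.one_sub_inv_le_log_of_pos
      (show 0 < ((i : ℝ) + 1 + a) / ((i : ℝ) + a) by positivity)
    rw [Real.log_div (by positivity) (by positivity), inv_div] at h2
    have h3 : 1 - ((i : ℝ) + a) / ((i : ℝ) + 1 + a) = 1 / ((i : ℝ) + 1 + a) := by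
      field_simp
      ring
    have h4 : 2 / ((i : ℝ) + 1 + a) = 2 * (1 / ((i : ℝ) + 1 + a)) := by ring
    push_cast
    linarith
  calc ∑ i ∈ Finset.range M, min (1 / ((i : ℝ) + 1)) (1 / a)
      ≤ ∑ i ∈ Finset.range M,
          (2 * Real.log (((i + 1 : ℕ) : ℝ) + a) - 2 * Real.log ((i : ℝ) + a)) :=
        Finset.sum_le_sum fun i _ => hstep i
    _ = 2 * Real.log ((M : ℝ) + a) - 2 * Real.log (((0 : ℕ) : ℝ) + a) :=
        Finset.sum_range_sub (fun i : ℕ => 2 * Real.log ((i : ℝ) + a)) M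
    _ = 2 * Real.log (1 + M / a) := by
        have h5 : 1 + (M : ℝ) / a = (M + a) / a := by field_simp; ring
        rw [h5, Real.log_div (by positivity) ha.ne']
        simp
        ring

/-- The `ℓ¹` norm of the smoothing kernel, with the constants not yet absorbed in the logarithm. -/
theorem sum_kernel_le (T τ h : ℝ) (hT : 1 ≤ T) (hτ : 0 < τ) (hh : 0 < h) (M : ℕ)
    (hM : (M : ℝ) * τ ≤ T) :
    ∑ i ∈ Finset.range M, min (1 / ((i : ℝ) + 1)) (τ / h ^ 2) ≤
      2 * Real.log T + 4 * min (Real.log (1 / τ + 1)) (Real.log (1 / h + 1)) := by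
  have hT0 : 0 < T := by linarith
  have hMτ : (M : ℝ) ≤ T / τ := (le_div_iff₀ hτ).2 hM
  rw [mul_min_of_nonneg _ _ (by norm_num), ← min_add_add_left]
  refine le_min ?_ ?_
  · have hL : 0 ≤ Real.log (1 / τ + 1) := Real.log_nonneg (by simp [hτ.le])
    have h1 : ∑ i ∈ Finset.range M, min (1 / ((i : ℝ) + 1)) (τ / h ^ 2) ≤
        ∑ i ∈ Finset.range M, min (1 / ((i : ℝ) + 1)) (1 / 1) := by
      refine Finset.sum_le_sum fun i _ => (min_le_left _ _).trans (le_min le_rfl ?_)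
      have hi : (0 : ℝ) ≤ i := Nat.cast_nonneg i
      rw [div_le_div_iff₀ (by positivity) (by positivity)]
      linarith
    have h2 := sum_min_le_log 1 one_pos M
    have h3 : Real.log (1 + (M : ℝ) / 1) ≤ Real.log (T * (1 / τ + 1)) := by
      refine Real.log_le_log (by positivity) ?_
      have : T * (1 / τ + 1) = T / τ + T := by ring
      linarith
    rw [Real.log_mul hT0.ne' (by positivity)] at h3
    linarith
  · have h1 : τ / h ^ 2 = 1 / (h ^ 2 / τ) := by field_simp
    rw [h1]
    have h2 := sum_min_le_log (h ^ 2 / τ) (by positivity) M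
    have h3 : Real.log (1 + (M : ℝ) / (h ^ 2 / τ)) ≤ Real.log (T * (1 / h + 1) ^ 2) := by
      refine Real.log_le_log (by positivity) ?_
      have h4 : (M : ℝ) / (h ^ 2 / τ) = M * τ / h ^ 2 := by field_simp
      have h5 : (M : ℝ) * τ / h ^ 2 ≤ T / h ^ 2 := by gcongr
      have h6 : T * (1 / h + 1) ^ 2 = T / h ^ 2 + 2 * (T / h) + T := by
        field_simp
        ring
      have h7 : 0 < T / h := by positivity
      linarith
    rw [Real.log_mul hT0.ne' (by positivity), Real.log_pow] at h3
    push_cast at h3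
    linarith

/-- The increment of the Duhamel sums is dominated by a convolution of the data with the kernel
`C₀ (δ_{i,0} + min(1/(i+1), τ/h²))`. -/
theorem norm_duhamel_increment_le {E : Type*} [NormedAddCommGroup E] [NormedSpace ℝ E]
    (C₀ τ h : ℝ) (hC₀ : 0 ≤ C₀) (hτ : 0 < τ) (M : ℕ) (S : ℕ → ℕ → E → E)
    (hstab : ∀ m n : ℕ, m ≤ n → n ≤ M → ∀ u : E, ‖S m n u‖ ≤ C₀ * ‖u‖)
    (hsmooth : ∀ m n : ℕ, m ≤ n → n < M → ∀ u : E,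
      ‖S m (n + 1) u - S m n u‖ ≤
        C₀ * τ * min (1 / (((n - m + 1 : ℕ) : ℝ) * τ)) (1 / h ^ 2) * ‖u‖)
    (f : ℕ → E) (k : ℕ) (hk : k < M) :
    ‖(∑ m ∈ Finset.range (k + 1), τ • S m (k + 1) (f m)) -
        ∑ m ∈ Finset.range k, τ • S m k (f m)‖ ≤
      ∑ m ∈ Finset.range (k + 1),
        C₀ * ((if k - m = 0 then 1 else 0) + min (1 / (((k - m : ℕ) : ℝ) + 1)) (τ / h ^ 2)) *
          (τ * ‖f m‖) := by
  rw [Finset.sum_range_succ, add_sub_right_comm, ← Finset.sum_sub_distrib]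
  refine (norm_add_le _ _).trans ?_
  rw [Finset.sum_range_succ]
  refine add_le_add ((norm_sum_le _ _).trans (Finset.sum_le_sum fun m hm => ?_)) ?_
  · have hmk : m < k := Finset.mem_range.1 hm
    have hs := hsmooth m k hmk.le hk (f m)
    rw [← smul_sub, norm_smul, Real.norm_of_nonneg hτ.le, if_neg (by omega), zero_add]
    have h1 : τ * min (1 / (((k - m + 1 : ℕ) : ℝ) * τ)) (1 / h ^ 2) =
        min (1 / (((k - m : ℕ) : ℝ) + 1)) (τ / h ^ 2) := by
      rw [mul_min_of_nonneg _ _ hτ.le]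
      congr 1
      · rw [Nat.cast_add, Nat.cast_one]
        field_simp
      · ring
    rw [mul_assoc C₀, h1] at hs
    refine (mul_le_mul_of_nonneg_left hs hτ.le).trans (le_of_eq ?_)
    ring
  · rw [norm_smul, Real.norm_of_nonneg hτ.le]
    have hs := mul_le_mul_of_nonneg_left (hstab k (k + 1) (by omega) hk (f k)) hτ.le
    refine hs.trans ?_
    have h2 : 0 ≤ min (1 / (((k - k : ℕ) : ℝ) + 1)) (τ / h ^ 2) :=
      le_min (by positivity) (by positivity)
    have h3 : 0 ≤ C₀ * min (1 / (((k - k : ℕ) : ℝ) + 1)) (τ / h ^ 2) * (τ * ‖f k‖) := by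
      positivity
    rw [if_pos (Nat.sub_self k)]
    linarith


/-- Abstract engine of the ℓ¹L² estimate (B.16): if the discrete solution operators `S m n`
satisfy the stability bound `‖S m n u‖ ≤ C₀‖u‖` and the smoothing bound
`‖S m (n+1) u - S m n u‖ ≤ C₀ τ min(1/((n-m+1)τ), 1/h²) ‖u‖`, then the Duhamel sums
`ω_n = ∑_{m=1}^n τ S_{m-1,n}(g_m)` (with `ω_0 = 0`) satisfy
`∑_{n=1}^M ‖ω_n - ω_{n-1}‖ ≤ C min(log(1/τ+1), log(1/h+1)) ∑_{m=1}^M τ‖g_m‖`,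
with `C` depending only on `C₀` and `T`. -/
theorem ell1L2_duhamel_engine (C₀ T : ℝ) (hC₀ : 0 ≤ C₀) (hT : 1 ≤ T) :
    ∃ C > 0, ∀ (E : Type) (_ : NormedAddCommGroup E) (_ : NormedSpace ℝ E)
      (τ h : ℝ), τ ∈ Set.Ioc (0 : ℝ) 1 → h ∈ Set.Ioc (0 : ℝ) 1 →
      ∀ M : ℕ, 1 ≤ M → (M : ℝ) * τ ≤ T →
      ∀ S : ℕ → ℕ → E → E,
        (∀ m n : ℕ, m ≤ n → n ≤ M → ∀ u : E, ‖S m n u‖ ≤ C₀ * ‖u‖) →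
        (∀ m n : ℕ, m ≤ n → n < M → ∀ u : E,
          ‖S m (n + 1) u - S m n u‖ ≤
            C₀ * τ * min (1 / (((n - m + 1 : ℕ) : ℝ) * τ)) (1 / h ^ 2) * ‖u‖) →
      ∀ g : ℕ → E,
        ∑ n ∈ Finset.Icc 1 M,
            ‖(∑ m ∈ Finset.Icc 1 n, τ • S (m - 1) n (g m)) -
              ∑ m ∈ Finset.Icc 1 (n - 1), τ • S (m - 1) (n - 1) (g m)‖ ≤
          C * min (Real.log (1 / τ + 1)) (Real.log (1 / h + 1)) *
            ∑ m ∈ Finset.Icc 1 M, τ * ‖g m‖ := by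
  have hlog2 : 0 < Real.log 2 := Real.log_pos (by norm_num)
  have hlogT : 0 ≤ Real.log T := Real.log_nonneg hT
  refine ⟨C₀ * ((1 + 2 * Real.log T) / Real.log 2 + 4) + 1, by positivity, ?_⟩
  intro E _ _ τ h hτ hh M hM1 hMT S hstab hsmooth g
  set L := min (Real.log (1 / τ + 1)) (Real.log (1 / h + 1)) with hL
  have hL2 : Real.log 2 ≤ L := by
    refine le_min (Real.log_le_log (by norm_num) ?_) (Real.log_le_log (by norm_num) ?_)
    · linarith [(one_le_div hτ.1).2 hτ.2]
    · linarith [(one_le_div hh.1).2 hh.2]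
  have hτ0 : 0 < τ := hτ.1
  simp only [sum_Icc_one_eq_sum_range, Nat.add_sub_cancel]
  let w : ℕ → ℝ := fun i =>
    C₀ * ((if i = 0 then 1 else 0) + min (1 / ((i : ℝ) + 1)) (τ / h ^ 2))
  have hw : ∀ i, 0 ≤ w i := by
    intro i
    have h1 : 0 ≤ min (1 / ((i : ℝ) + 1)) (τ / h ^ 2) :=
      le_min (by positivity) (by positivity)
    have h2 : (0 : ℝ) ≤ if i = 0 then 1 else 0 := by split_ifs <;> norm_num
    exact mul_nonneg hC₀ (add_nonneg h2 h1)
  have hwsum : ∑ i ∈ Finset.range M, w i ≤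
      (C₀ * ((1 + 2 * Real.log T) / Real.log 2 + 4) + 1) * L := by
    have h1 : ∑ i ∈ Finset.range M, w i = C₀ * (1 +
        ∑ i ∈ Finset.range M, min (1 / ((i : ℝ) + 1)) (τ / h ^ 2)) := by
      simp only [w]
      rw [← Finset.mul_sum, Finset.sum_add_distrib, Finset.sum_ite_eq',
        if_pos (Finset.mem_range.2 hM1)]
    have h2 := sum_kernel_le T τ h hT hτ.1 hh.1 M hMT
    rw [← hL] at h2
    -- `L ≥ log 2` absorbs the additive constant into the logarithm.
    have h3 : 1 + 2 * Real.log T ≤ (1 + 2 * Real.log T) / Real.log 2 * L := by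
      rw [div_mul_eq_mul_div, le_div_iff₀ hlog2]
      gcongr
    have h4 : C₀ * (1 + ∑ i ∈ Finset.range M, min (1 / ((i : ℝ) + 1)) (τ / h ^ 2)) ≤
        C₀ * ((1 + 2 * Real.log T) / Real.log 2 * L + 4 * L) :=
      mul_le_mul_of_nonneg_left (by linarith) hC₀
    rw [h1]
    linarith
  have hb : ∀ m, 0 ≤ τ * ‖g (m + 1)‖ := fun m => by positivity
  calc _ ≤ ∑ k ∈ Finset.range M, ∑ m ∈ Finset.range (k + 1), w (k - m) * (τ * ‖g (m + 1)‖) :=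
        Finset.sum_le_sum fun k hk => norm_duhamel_increment_le C₀ τ h hC₀ hτ.1 M S hstab
          hsmooth (fun m => g (m + 1)) k (Finset.mem_range.1 hk)
    _ ≤ (∑ i ∈ Finset.range M, w i) * ∑ m ∈ Finset.range M, τ * ‖g (m + 1)‖ :=
        sum_convolution_le w (fun m => τ * ‖g (m + 1)‖) hw hb M
    _ ≤ _ := mul_le_mul_of_nonneg_right hwsum (Finset.sum_nonneg fun m _ => hb m)
end
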